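/- Every nonzero 2-dimensional anti-pre-Lie Poisson algebra (A, ·, ∘) over ℂ is isomorphic to one of the following algebras, given on a basis e1, e2 (all unlisted products of basis elements, other than those forced by commutativity of ·, are zero): with · ≡ 0: the anti-pre-Lie algebras A01: e1∘e1 = e1, e2∘e2 = e2; A02: e1∘e1 = e1, e1∘e2 = e2, e2∘e1 = e2; A03: e1∘e1 = e1; A04: e1∘e1 = e2; A05: e1∘e1 = −e2, e2∘e1 = −e1; A06^λ: e2∘e1 = −e1, e2∘e2 = λ·e2; A07: e2∘e1 = −e1, e2∘e2 = e1 − e2; A08^λ (λ ≠ −1): e1∘e2 = (λ+1)·e1, e2∘e1 = λ·e1, e2∘e2 = (λ−1)·e2; A09: e1∘e2 = −e1, e2∘e1 = −2·e1, e2∘e2 = e1 − 3·e2; and (α, β ∈ ℂ): A10^{α,β}: e1·e1 = e1, e2·e2 = e2, e1∘e1 = α·e1, e2∘e2 = β·e2; A11^{α,β}: e1·e1 = e1, e1·e2 = e2, e1∘e1 = (2α−β)·e1 + e2, e1∘e2 = α·e2, e2∘e1 = β·e2; A12^{α,β}: e1·e1 = e1, e1·e2 = e2, e1∘e1 = (2α−β)·e1,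 e1∘e2 = α·e2, e2∘e1 = β·e2; A13^α: e1·e1 = e1, e1∘e1 = α·e1, e2∘e2 = e2; A14^α: e1·e1 = e1, e1∘e1 = α·e1; A15^α (α ≠ 1/2): e1·e1 = e2, e1∘e1 = (2−α)·e1, e1∘e2 = e2, e2∘e1 = α·e2; A16^α: e1·e1 = e2, e1∘e1 = (3/2)·e1 + α·e2, e1∘e2 = e2, e2∘e1 = (1/2)·e2; A17: e1·e1 = e2, e1∘e1 = −e1, e2∘e1 = e2; A18^α: e1·e1 = e2, e1∘e1 = α·e2. Moreover, among the algebras A10–A18 the only nontrivial isomorphism is A10^{α,β} ≅ A10^{β,α}. -/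

import Mathlib

noncomputable section

/-- The 2-dimensional complex vector space. -/
abbrev V2 : Type := Fin 2 → ℂ

/-- The bilinear multiplication on `V2` determined by a table of structure constants:
`c i j` is the product of the `i`-th and `j`-th basis vectors. -/
def tm (c : Fin 2 → Fin 2 → V2) : V2 → V2 → V2 :=
  fun x y => ∑ i, ∑ j, (x i * y j) • c i j

/-- Multiplication table with the given values of `e1*e1`, `e1*e2`, `e2*e1`, `e2*e2`. -/
def tbl (a b c d : V2) : Fin 2 → Fin 2 → V2 := ![![a, b], ![c, d]]

/-- The zero multiplication on `V2`. -/
def zm : V2 → V2 → V2 := fun _ _ => 0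

/-- Isomorphism of algebras with one multiplication: a ℂ-linear bijection preserving
the multiplication. -/
def Iso1 {A : Type*} [AddCommGroup A] [Module ℂ A] {B : Type*} [AddCommGroup B]
    [Module ℂ B] (μ : A → A → A) (ν : B → B → B) : Prop :=
  ∃ φ : A ≃ₗ[ℂ] B, ∀ x y, φ (μ x y) = ν (φ x) (φ y)

/-- Isomorphism of algebras with two multiplications: a ℂ-linear bijection preserving
both multiplications. -/
def Iso2 {A : Type*} [AddCommGroup A] [Module ℂ A] {B : Type*} [AddCommGroup B]
    [Module ℂ B] (μ₁ μ₂ : A → A → A) (ν₁ ν₂ : B → B → B) : Prop :=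
  ∃ φ : A ≃ₗ[ℂ] B,
    (∀ x y, φ (μ₁ x y) = ν₁ (φ x) (φ y)) ∧ (∀ x y, φ (μ₂ x y) = ν₂ (φ x) (φ y))

/-- The commutative associative algebra A01: `e1·e1 = e1`, `e2·e2 = e2`. -/
def cA01 : Fin 2 → Fin 2 → V2 := tbl ![1,0] 0 0 ![0,1]

/-- The commutative associative algebra A02: `e1·e1 = e1`, `e1·e2 = e2·e1 = e2`. -/
def cA02 : Fin 2 → Fin 2 → V2 := tbl ![1,0] ![0,1] ![0,1] 0

/-- The commutative associative algebra A03: `e1·e1 = e1`. -/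
def cA03 : Fin 2 → Fin 2 → V2 := tbl ![1,0] 0 0 0

/-- The commutative associative algebra A04: `e1·e1 = e2`. -/
def cA04 : Fin 2 → Fin 2 → V2 := tbl ![0,1] 0 0 0

/-- Index of the nonzero 2-dimensional anti-pre-Lie algebras A01–A09. -/
inductive APIdx : Type
  | a01 | a02 | a03 | a04 | a05
  | a06 (lam : ℂ)
  | a07
  | a08 (lam : ℂ) (h : lam ≠ -1)
  | a09

/-- The multiplication tables of the nonzero 2-dimensional anti-pre-Lie algebras
A01–A09. -/
def apAlg : APIdx → Fin 2 → Fin 2 → V2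
  | .a01 => tbl ![1,0] 0 0 ![0,1]                        -- e1∘e1=e1, e2∘e2=e2
  | .a02 => tbl ![1,0] ![0,1] ![0,1] 0                   -- e1∘e1=e1, e1∘e2=e2, e2∘e1=e2
  | .a03 => tbl ![1,0] 0 0 0                             -- e1∘e1=e1
  | .a04 => tbl ![0,1] 0 0 0                             -- e1∘e1=e2
  | .a05 => tbl ![0,-1] 0 ![-1,0] 0                      -- e1∘e1=-e2, e2∘e1=-e1
  | .a06 lam => tbl 0 0 ![-1,0] ![0,lam]                 -- e2∘e1=-e1, e2∘e2=λe2
  | .a07 => tbl 0 0 ![-1,0] ![1,-1]                      -- e2∘e1=-e1, e2∘e2=e1-e2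
  | .a08 lam _ => tbl 0 ![lam+1,0] ![lam,0] ![0,lam-1]
  | .a09 => tbl 0 ![-1,0] ![-2,0] ![1,-3]

/-- Index of the anti-pre-Lie Poisson algebras A10–A18 with nontrivial commutative
associative multiplication (A15^α only for α ≠ 1/2). -/
inductive APPIdx : Type
  | a10 (α β : ℂ)
  | a11 (α β : ℂ)
  | a12 (α β : ℂ)
  | a13 (α : ℂ)
  | a14 (α : ℂ)
  | a15 (α : ℂ) (h : α ≠ 1/2)
  | a16 (α : ℂ)
  | a17
  | a18 (α : ℂ)

/-- The commutative associative multiplication of A10–A18. -/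
def appMul : APPIdx → Fin 2 → Fin 2 → V2
  | .a10 _ _ => cA01
  | .a11 _ _ => cA02
  | .a12 _ _ => cA02
  | .a13 _ => cA03
  | .a14 _ => cA03
  | .a15 _ _ => cA04
  | .a16 _ => cA04
  | .a17 => cA04
  | .a18 _ => cA04

/-- The anti-pre-Lie multiplication of A10–A18. -/
def appCirc : APPIdx → Fin 2 → Fin 2 → V2
  | .a10 α β => tbl ![α,0] 0 0 ![0,β]
  | .a11 α β => tbl ![2*α-β,1] ![0,α] ![0,β] 0
  | .a12 α β => tbl ![2*α-β,0] ![0,α] ![0,β] 0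
  | .a13 α => tbl ![α,0] 0 0 ![0,1]
  | .a14 α => tbl ![α,0] 0 0 0
  | .a15 α _ => tbl ![2-α,0] ![0,1] ![0,α] 0
  | .a16 α => tbl ![3/2,α] ![0,1] ![0,1/2] 0
  | .a17 => tbl ![-1,0] 0 ![0,1] 0
  | .a18 α => tbl ![0,α] 0 0 0

section Tables

variable {A : Type*} [AddCommGroup A] [Module ℂ A]

/-- The multiplication `m` has the table `t` in the coordinates given by `E`. -/
def IsTable (E : V2 ≃ₗ[ℂ] A) (m : A →ₗ[ℂ] A →ₗ[ℂ] A) (t : Fin 2 → Fin 2 → V2) : Prop :=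
  ∀ u v : V2, m (E u) (E v) = E (tm t u v)

theorem IsTable.iso2 {E : V2 ≃ₗ[ℂ] A} {mul circ : A →ₗ[ℂ] A →ₗ[ℂ] A}
    {m c : Fin 2 → Fin 2 → V2} (hm : IsTable E mul m) (hc : IsTable E circ c) :
    Iso2 (fun x y => mul x y) (fun x y => circ x y) (tm m) (tm c) := by
  refine ⟨E.symm, fun x y => ?_, fun x y => ?_⟩ <;>
    obtain ⟨u, rfl⟩ := E.surjective x <;>
    obtain ⟨v, rfl⟩ := E.surjective y <;>
    simp only [LinearEquiv.symm_apply_apply, LinearEquiv.symm_apply_eq]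
  · exact hm u v
  · exact hc u v

theorem LinearMap.apply_eq_smul_single (f : V2 →ₗ[ℂ] A) (u : V2) :
    f u = u 0 • f (Pi.single 0 1) + u 1 • f (Pi.single 1 1) := by
  rw [← map_smul, ← map_smul, ← map_add]
  congr 1
  ext k
  fin_cases k <;> simp

theorem isTable_of_single {E : V2 ≃ₗ[ℂ] A} {m : A →ₗ[ℂ] A →ₗ[ℂ] A}
    {t : Fin 2 → Fin 2 → V2}
    (h : ∀ i j, m (E (Pi.single i 1)) (E (Pi.single j 1)) = E (t i j)) : IsTable E m t := by
  intro u v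
  have hE := LinearMap.apply_eq_smul_single E.toLinearMap
  simp only [LinearEquiv.coe_coe] at hE
  rw [hE u, hE v]
  simp only [tm, Fin.sum_univ_two, map_add, map_smul, LinearMap.add_apply, LinearMap.smul_apply, h]
  module

theorem exists_isTable (E : V2 ≃ₗ[ℂ] A) (m : A →ₗ[ℂ] A →ₗ[ℂ] A) : ∃ t, IsTable E m t :=
  ⟨fun i j => E.symm (m (E (Pi.single i 1)) (E (Pi.single j 1))),
    isTable_of_single fun i j => by simp⟩

theorem exists_equiv_of_linearIndependent (hdim : Module.finrank ℂ A = 2) {x y : A}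
    (hli : LinearIndependent ℂ ![x, y]) :
    ∃ E : V2 ≃ₗ[ℂ] A, E (Pi.single 0 1) = x ∧ E (Pi.single 1 1) = y := by
  let b : Module.Basis (Fin 2) ℂ A := basisOfLinearIndependentOfCardEqFinrank hli (by simp [hdim])
  exact ⟨b.equivFun.symm, by simp [b], by simp [b]⟩

theorem exists_linearIndependent_pair (hdim : Module.finrank ℂ A = 2) {x : A} (hx : x ≠ 0) :
    ∃ y, LinearIndependent ℂ ![x, y] := by
  by_contra! h
  have hs : ∀ y, ∃ c : ℂ, c • x = y := by
    intro y
    have := h y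
    rw [LinearIndependent.pair_iff' hx] at this
    push Not at this
    exact this
  have := finrank_eq_one x hx hs
  omega

theorem exists_changeOfBasis (hdim : Module.finrank ℂ A = 2) (E : V2 ≃ₗ[ℂ] A) (P : Fin 2 → V2)
    (hP : P 0 0 * P 1 1 - P 0 1 * P 1 0 ≠ 0) :
    ∃ E' : V2 ≃ₗ[ℂ] A, (∀ i, E' (Pi.single i 1) = E (P i)) ∧
      ∀ (m : A →ₗ[ℂ] A →ₗ[ℂ] A) (t t' : Fin 2 → Fin 2 → V2), IsTable E m t →
        (∀ i j, t' i j 0 • P 0 + t' i j 1 • P 1 = tm t (P i) (P j)) → IsTable E' m t' := by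
  have hli : LinearIndependent ℂ P := by
    refine (Matrix.linearIndependent_rows_iff_isUnit (A := Matrix.of P)).2 ?_
    rw [Matrix.isUnit_iff_isUnit_det, Matrix.det_fin_two, isUnit_iff_ne_zero]
    exact hP
  have hli' : LinearIndependent ℂ ![E (P 0), E (P 1)] := by
    have := hli.map' E.toLinearMap E.ker
    have he : ![E (P 0), E (P 1)] = E.toLinearMap ∘ P := by
      ext i : 1
      fin_cases i <;> simp
    rw [he]
    exact this
  obtain ⟨E', h0, h1⟩ := exists_equiv_of_linearIndependent hdim hli'
  have hE' : ∀ i, E' (Pi.single i 1) = E (P i) := by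
    intro i
    fin_cases i
    · exact h0
    · exact h1
  refine ⟨E', hE', fun m t t' ht h => isTable_of_single fun i j => ?_⟩
  have := LinearMap.apply_eq_smul_single E'.toLinearMap (t' i j)
  simp only [LinearEquiv.coe_coe] at this
  rw [hE', hE', ht, ← h, this, hE', hE', map_add, map_smul, map_smul]

theorem exists_self_mul_ne_zero {m : A →ₗ[ℂ] A →ₗ[ℂ] A} (hcomm : ∀ x y, m x y = m y x)
    (hm : ∃ x y, m x y ≠ 0) : ∃ x, m x x ≠ 0 := by
  by_contra! h
  obtain ⟨x, y, hxy⟩ := hm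
  apply hxy
  have := h (x + y)
  simp only [map_add, LinearMap.add_apply, h, hcomm y x, zero_add, add_zero] at this
  rw [← two_smul ℂ] at this
  simpa using this

theorem exists_idempotent_or_isTable (hdim : Module.finrank ℂ A = 2)
    {m : A →ₗ[ℂ] A →ₗ[ℂ] A} (hcomm : ∀ x y, m x y = m y x)
    (hassoc : ∀ x y z, m (m x y) z = m x (m y z)) (hm : ∃ x y, m x y ≠ 0) :
    (∃ e, e ≠ 0 ∧ m e e = e) ∨ ∃ E : V2 ≃ₗ[ℂ] A, IsTable E m cA04 := by
  by_cases hli : ∃ x, LinearIndependent ℂ ![x, m x x]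
  · obtain ⟨x, hx⟩ := hli
    obtain ⟨E, h0, h1⟩ := exists_equiv_of_linearIndependent hdim hx
    obtain ⟨u, hu⟩ := E.surjective (m x (m x x))
    have h3 := LinearMap.apply_eq_smul_single E.toLinearMap u
    simp only [LinearEquiv.coe_coe, hu, h0, h1] at h3
    generalize u 0 = b at h3
    generalize u 1 = a at h3
    have h3' : m (m x x) x = b • x + a • m x x := by rw [hcomm, h3]
    have h4 : m (m x x) (m x x) = b • m x x + a • (b • x + a • m x x) := by
      rw [hassoc, h3, map_add, map_smul, map_smul, h3]
    by_cases hb : b = 0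
    · by_cases ha : a = 0
      · right
        refine ⟨E, isTable_of_single ?_⟩
        have hE0 : E (![0, 1]) = m x x := by
          rw [← h1]
          congr 1
          ext k
          fin_cases k <;> simp
        simp [Fin.forall_fin_two, h0, h1, cA04, tbl, hE0, h3, h3', h4, ha, hb]
      · left
        refine ⟨(a ^ 2)⁻¹ • m x x, ?_, ?_⟩
        · have := hx.ne_zero 1
          simpa [ha] using this
        · simp only [map_smul, LinearMap.smul_apply, h4, hb]
          match_scalars <;> field_simp <;> simp
    · left
      refine ⟨b⁻¹ • (m x x - a • x), ?_, ?_⟩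
      · intro h
        have h' := LinearIndependent.pair_iff.1 hx (-b⁻¹ * a) b⁻¹ (by rw [← h]; module)
        exact inv_ne_zero hb h'.2
      · simp only [map_smul, map_sub, LinearMap.sub_apply, LinearMap.smul_apply, h3, h3', h4]
        match_scalars <;> field_simp <;> ring
  · left
    push Not at hli
    obtain ⟨x, hx⟩ := exists_self_mul_ne_zero hcomm hm
    have hx0 : x ≠ 0 := by
      rintro rfl
      simp at hx
    have := hli x
    rw [LinearIndependent.pair_iff' hx0] at this
    push Not at this
    obtain ⟨c, hc⟩ := this
    have hc0 : c ≠ 0 := by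
      rintro rfl
      simp [← hc] at hx
    refine ⟨c⁻¹ • x, by simp [hx0, hc0], ?_⟩
    simp only [map_smul, LinearMap.smul_apply, ← hc]
    match_scalars
    field_simp

theorem IsTable.comm {E : V2 ≃ₗ[ℂ] A} {m : A →ₗ[ℂ] A →ₗ[ℂ] A} {t : Fin 2 → Fin 2 → V2}
    (h : IsTable E m t) (hcomm : ∀ x y, m x y = m y x) (i j k : Fin 2) :
    t i j k = t j i k := by
  have := hcomm (E (Pi.single i 1)) (E (Pi.single j 1))
  rw [h, h, E.injective.eq_iff] at this
  have := congrFun this k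
  fin_cases i <;> fin_cases j <;> simp [tm] at this ⊢ <;> exact this

theorem exists_isTable_of_comm_of_assoc (hdim : Module.finrank ℂ A = 2)
    {m : A →ₗ[ℂ] A →ₗ[ℂ] A} (hcomm : ∀ x y, m x y = m y x)
    (hassoc : ∀ x y z, m (m x y) z = m x (m y z)) (hm : ∃ x y, m x y ≠ 0) :
    ∃ E : V2 ≃ₗ[ℂ] A, IsTable E m cA01 ∨ IsTable E m cA02 ∨ IsTable E m cA03 ∨
      IsTable E m cA04 := by
  rcases exists_idempotent_or_isTable hdim hcomm hassoc hm with ⟨e, he, hee⟩ | ⟨E, hE⟩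
  swap
  · exact ⟨E, by tauto⟩
  obtain ⟨y, hy⟩ := exists_linearIndependent_pair hdim he
  obtain ⟨E, h0, h1⟩ := exists_equiv_of_linearIndependent hdim hy
  obtain ⟨t, ht⟩ := exists_isTable E m
  have hc : ∀ k, t 1 0 k = t 0 1 k := ht.comm hcomm 1 0
  have ha : ∀ i j k l, tm t (tm t (Pi.single i 1) (Pi.single j 1)) (Pi.single k 1) l =
      tm t (Pi.single i 1) (tm t (Pi.single j 1) (Pi.single k 1)) l := by
    intro i j k l
    refine congrFun (E.injective ?_) l
    rw [← ht, ← ht, ← ht, ← ht, hassoc]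
  have ht0 : ∀ k, t 0 0 k = (Pi.single 0 1 : V2) k := by
    intro k
    have := ht (Pi.single 0 1) (Pi.single 0 1)
    rw [h0, hee, ← h0, E.injective.eq_iff] at this
    simpa [tm] using (congrFun this k).symm
  simp [Fin.forall_fin_two] at hc ht0
  simp [Fin.forall_fin_two, tm, hc, ht0] at ha
  generalize hp : t 0 1 0 = p at *
  generalize hq : t 0 1 1 = q at *
  generalize hr : t 1 1 0 = r at *
  generalize hs : t 1 1 1 = s at *
  have hq' : q = 1 ∨ q = 0 := by grind
  rcases hq' with rfl | rfl
  · have hp0 : p = 0 := by grind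
    subst hp0
    obtain ⟨d, hd⟩ := IsAlgClosed.exists_pow_nat_eq (r + s ^ 2 / 4) (n := 2) (by norm_num)
    by_cases hd0 : d = 0
    · obtain ⟨E', -, hE'⟩ := exists_changeOfBasis hdim E ![![1, 0], ![-s / 2, 1]] (by simp)
      refine ⟨E', Or.inr (Or.inl (hE' m t _ ht ?_))⟩
      simp [Fin.forall_fin_two, tm, tbl, cA02, funext_iff, hc, ht0, hp, hq, hr, hs]
      grind
    · obtain ⟨E', -, hE'⟩ := exists_changeOfBasis hdim E
        ![![1 / 2 - s / (4 * d), 1 / (2 * d)], ![1 / 2 + s / (4 * d), -1 / (2 * d)]]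
        (by simp; grind)
      refine ⟨E', Or.inl (hE' m t _ ht ?_)⟩
      simp [Fin.forall_fin_two, tm, tbl, cA01, funext_iff, hc, ht0, hp, hq, hr, hs]
      grind
  · by_cases hs0 : s = 0
    · obtain ⟨E', -, hE'⟩ := exists_changeOfBasis hdim E ![![1, 0], ![-p, 1]] (by simp)
      refine ⟨E', Or.inr (Or.inr (Or.inl (hE' m t _ ht ?_)))⟩
      simp [Fin.forall_fin_two, tm, tbl, cA03, funext_iff, hc, ht0, hp, hq, hr, hs]
      grind
    · obtain ⟨E', -, hE'⟩ := exists_changeOfBasis hdim E ![![1, 0], ![-p / s, 1 / s]]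
        (by simp; grind)
      refine ⟨E', Or.inl (hE' m t _ ht ?_)⟩
      simp [Fin.forall_fin_two, tm, tbl, cA01, funext_iff, hc, ht0, hp, hq, hr, hs]
      grind

theorem exists_commutator_eq (hdim : Module.finrank ℂ A = 2) {circ : A →ₗ[ℂ] A →ₗ[ℂ] A}
    (h : ∃ x y, circ x y ≠ circ y x) :
    ∃ (E : V2 ≃ₗ[ℂ] A) (c : Fin 2 → Fin 2 → V2), IsTable E circ c ∧
      c 1 0 0 = c 0 1 0 - 1 ∧ c 1 0 1 = c 0 1 1 := by
  obtain ⟨x, y, hxy⟩ := h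
  obtain ⟨E⟩ : Nonempty (V2 ≃ₗ[ℂ] A) := by
    have : Module.Finite ℂ A := Module.finite_of_finrank_pos (by omega)
    exact ⟨LinearEquiv.ofFinrankEq _ _ (by simp [hdim])⟩
  obtain ⟨t, ht⟩ := exists_isTable E circ
  have key : ∃ P : V2, (t 0 1 0 - t 1 0 0) * P 1 - (t 0 1 1 - t 1 0 1) * P 0 = 1 := by
    by_cases hg : t 0 1 0 - t 1 0 0 = 0
    · by_cases hg' : t 0 1 1 - t 1 0 1 = 0
      · exfalso
        apply hxy
        obtain ⟨u, rfl⟩ := E.surjective x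
        obtain ⟨v, rfl⟩ := E.surjective y
        rw [ht, ht]
        congr 1
        ext k
        fin_cases k <;> simp [tm] <;> grind
      · exact ⟨![-1 / (t 0 1 1 - t 1 0 1), 0], by simp; grind⟩
    · exact ⟨![0, 1 / (t 0 1 0 - t 1 0 0)], by simp; grind⟩
  obtain ⟨P, hP⟩ := key
  obtain ⟨E', hE', -⟩ := exists_changeOfBasis hdim E
    ![![t 0 1 0 - t 1 0 0, t 0 1 1 - t 1 0 1], P] (by simp; rw [hP]; norm_num)
  obtain ⟨c, hc⟩ := exists_isTable E' circ
  have h1 : circ (E' (Pi.single 0 1)) (E' (Pi.single 1 1)) -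
      circ (E' (Pi.single 1 1)) (E' (Pi.single 0 1)) = E' (Pi.single 0 1) := by
    rw [hE', hE', ht, ht, ← map_sub]
    congr 1
    ext k
    fin_cases k <;> simp [tm] <;> grind
  rw [hc, hc, ← map_sub, E'.injective.eq_iff] at h1
  have h2 := congrFun h1 0
  have h3 := congrFun h1 1
  simp [tm] at h2 h3
  exact ⟨E', c, hc, by grind, by grind⟩

theorem exists_isTable_of_not_comm (hdim : Module.finrank ℂ A = 2)
    {circ : A →ₗ[ℂ] A →ₗ[ℂ] A} (h : ∃ x y, circ x y ≠ circ y x)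
    (hap : ∀ x y z : A, circ x (circ y z) - circ y (circ x z) =
      circ (circ y x - circ x y) z) :
    ∃ (E : V2 ≃ₗ[ℂ] A) (i : APIdx), IsTable E circ (apAlg i) := by
  obtain ⟨E, c, hc, hc0, hc1⟩ := exists_commutator_eq hdim h
  have ha : ∀ i l, (tm c (Pi.single 0 1) (tm c (Pi.single 1 1) (Pi.single i 1)) -
      tm c (Pi.single 1 1) (tm c (Pi.single 0 1) (Pi.single i 1))) l =
      tm c (tm c (Pi.single 1 1) (Pi.single 0 1) - tm c (Pi.single 0 1) (Pi.single 1 1))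
        (Pi.single i 1) l := by
    intro i l
    refine congrFun (E.injective ?_) l
    rw [← hc, map_sub, map_sub, ← hc, ← hc, ← hc, ← hc, ← hc, ← hc, hap]
  simp [Fin.forall_fin_two, tm, hc0, hc1] at ha
  generalize hp : c 0 0 0 = p at *
  generalize hq : c 0 0 1 = q at *
  generalize hk : c 0 1 0 = k at *
  generalize hl : c 0 1 1 = l at *
  generalize hu : c 1 1 0 = u at *
  generalize hv : c 1 1 1 = v at *
  have hlp : l = -p := by grind
  subst hlp
  have hpk : p ^ 2 + q * k = 0 := by grind
  by_cases hq0 : q = 0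
  · have hp0 : p = 0 := by grind
    subst hq0 hp0
    by_cases hk0 : k = 0
    · subst hk0
      by_cases hv1 : v = -1
      · by_cases hu0 : u = 0
        · obtain ⟨E', -, hE'⟩ := exists_changeOfBasis hdim E ![![1, 0], ![0, 1]] (by simp)
          refine ⟨E', .a06 (-1), hE' circ c _ hc ?_⟩
          simp [Fin.forall_fin_two, tm, tbl, apAlg, funext_iff, *]
        · obtain ⟨E', -, hE'⟩ := exists_changeOfBasis hdim E ![![u, 0], ![0, 1]] (by simp [hu0])
          refine ⟨E', .a07, hE' circ c _ hc ?_⟩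
          simp [Fin.forall_fin_two, tm, tbl, apAlg, funext_iff, *]
      · have hv1' : v + 1 ≠ 0 := by grind
        obtain ⟨E', -, hE'⟩ := exists_changeOfBasis hdim E ![![1, 0], ![u / (v + 1), 1]] (by simp)
        refine ⟨E', .a06 v, hE' circ c _ hc ?_⟩
        simp [Fin.forall_fin_two, tm, tbl, apAlg, funext_iff, *]
        grind
    · have hvk : v = k - 2 := by grind
      subst hvk
      have hk1 : k - 1 ≠ -1 := by grind
      by_cases hk2 : k + 1 = 0
      · by_cases hu0 : u = 0
        · obtain ⟨E', -, hE'⟩ := exists_changeOfBasis hdim E ![![1, 0], ![0, 1]] (by simp)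
          refine ⟨E', .a08 (k - 1) hk1, hE' circ c _ hc ?_⟩
          simp [Fin.forall_fin_two, tm, tbl, apAlg, funext_iff, *]
          grind
        · obtain ⟨E', -, hE'⟩ := exists_changeOfBasis hdim E ![![u, 0], ![0, 1]] (by simp [hu0])
          refine ⟨E', .a09, hE' circ c _ hc ?_⟩
          simp [Fin.forall_fin_two, tm, tbl, apAlg, funext_iff, *]
          grind
      · obtain ⟨E', -, hE'⟩ := exists_changeOfBasis hdim E ![![1, 0], ![-u / (k + 1), 1]] (by simp)
        refine ⟨E', .a08 (k - 1) hk1, hE' circ c _ hc ?_⟩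
        simp [Fin.forall_fin_two, tm, tbl, apAlg, funext_iff, *]
        grind
  · obtain ⟨s, hs⟩ := IsAlgClosed.exists_pow_nat_eq (-q⁻¹) (n := 2) (by norm_num)
    have hs' : s ^ 2 * q = -1 := by
      rw [hs]
      field_simp
    have hs0 : s ≠ 0 := by grind
    have hk' : k = -p ^ 2 / q := by grind
    obtain ⟨E', -, hE'⟩ := exists_changeOfBasis hdim E ![![s, 0], ![p / q, 1]] (by simp [hs0])
    refine ⟨E', .a05, hE' circ c _ hc ?_⟩
    clear hk' hs
    simp [Fin.forall_fin_two, tm, tbl, apAlg, funext_iff, *]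
    grind

theorem IsTable.compat {E : V2 ≃ₗ[ℂ] A} {mul circ : A →ₗ[ℂ] A →ₗ[ℂ] A}
    {m c : Fin 2 → Fin 2 → V2} (hm : IsTable E mul m) (hc : IsTable E circ c)
    (hcompat : ∀ x y z : A, (2 : ℂ) • circ x (mul y z) =
      circ (mul z x) y + mul z (circ x y)) (i j k l : Fin 2) :
    2 * tm c (Pi.single i 1) (tm m (Pi.single j 1) (Pi.single k 1)) l =
      tm c (tm m (Pi.single k 1) (Pi.single i 1)) (Pi.single j 1) l +
        tm m (Pi.single k 1) (tm c (Pi.single i 1) (Pi.single j 1)) l := by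
  have := hcompat (E (Pi.single i 1)) (E (Pi.single j 1)) (E (Pi.single k 1))
  rw [hm, hc, hm, hc, hc, hm, ← map_add, ← map_smul, E.injective.eq_iff] at this
  exact congrFun this l

theorem exists_isTable_of_mul_ne_zero (hdim : Module.finrank ℂ A = 2)
    {mul circ : A →ₗ[ℂ] A →ₗ[ℂ] A} (hcomm : ∀ x y : A, mul x y = mul y x)
    (hassoc : ∀ x y z : A, mul (mul x y) z = mul x (mul y z))
    (hap : ∀ x y z : A, circ x (circ y z) - circ y (circ x z) =
      circ (circ y x - circ x y) z)
    (hcompat : ∀ x y z : A, (2 : ℂ) • circ x (mul y z) =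
      circ (mul z x) y + mul z (circ x y)) (hm : ∃ x y, mul x y ≠ 0) :
    ∃ (E : V2 ≃ₗ[ℂ] A) (i : APPIdx), IsTable E mul (appMul i) ∧ IsTable E circ (appCirc i) := by
  obtain ⟨E, hE⟩ := exists_isTable_of_comm_of_assoc hdim hcomm hassoc hm
  obtain ⟨c, hc⟩ := exists_isTable E circ
  have ha : ∀ i l, (tm c (Pi.single 0 1) (tm c (Pi.single 1 1) (Pi.single i 1)) -
      tm c (Pi.single 1 1) (tm c (Pi.single 0 1) (Pi.single i 1))) l =
      tm c (tm c (Pi.single 1 1) (Pi.single 0 1) - tm c (Pi.single 0 1) (Pi.single 1 1))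
        (Pi.single i 1) l := by
    intro i l
    refine congrFun (E.injective ?_) l
    rw [← hc, map_sub, map_sub, ← hc, ← hc, ← hc, ← hc, ← hc, ← hc, hap]
  rcases hE with hm | hm | hm | hm <;> have hb := hm.compat hc hcompat
  · simp [Fin.forall_fin_two, tm, tbl, cA01] at hb
    obtain ⟨E', -, hE'⟩ := exists_changeOfBasis hdim E ![![1, 0], ![0, 1]] (by simp)
    refine ⟨E', .a10 (c 0 0 0) (c 1 1 1), hE' mul _ _ hm ?_, hE' circ c _ hc ?_⟩
    · simp [Fin.forall_fin_two, tm, tbl, appMul, cA01, funext_iff]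
    · simp [Fin.forall_fin_two, tm, tbl, appCirc, funext_iff]
      grind
  · simp [Fin.forall_fin_two, tm, tbl, cA02] at hb
    by_cases hq : c 0 0 1 = 0
    · obtain ⟨E', -, hE'⟩ := exists_changeOfBasis hdim E ![![1, 0], ![0, 1]] (by simp)
      refine ⟨E', .a12 (c 0 1 1) (c 1 0 1), hE' mul _ _ hm ?_, hE' circ c _ hc ?_⟩
      · simp [Fin.forall_fin_two, tm, tbl, appMul, cA02, funext_iff]
      · simp [Fin.forall_fin_two, tm, tbl, appCirc, funext_iff]
        grind
    · obtain ⟨E', -, hE'⟩ := exists_changeOfBasis hdim E ![![1, 0], ![0, c 0 0 1]] (by simp [hq])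
      refine ⟨E', .a11 (c 0 1 1) (c 1 0 1), hE' mul _ _ hm ?_, hE' circ c _ hc ?_⟩
      · simp [Fin.forall_fin_two, tm, tbl, appMul, cA02, funext_iff]
      · simp [Fin.forall_fin_two, tm, tbl, appCirc, funext_iff]
        grind
  · simp [Fin.forall_fin_two, tm, tbl, cA03] at hb
    by_cases hq : c 1 1 1 = 0
    · obtain ⟨E', -, hE'⟩ := exists_changeOfBasis hdim E ![![1, 0], ![0, 1]] (by simp)
      refine ⟨E', .a14 (c 0 0 0), hE' mul _ _ hm ?_, hE' circ c _ hc ?_⟩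
      · simp [Fin.forall_fin_two, tm, tbl, appMul, cA03, funext_iff]
      · simp [Fin.forall_fin_two, tm, tbl, appCirc, funext_iff]
        grind
    · obtain ⟨E', -, hE'⟩ := exists_changeOfBasis hdim E ![![1, 0], ![0, (c 1 1 1)⁻¹]]
        (by simp [hq])
      refine ⟨E', .a13 (c 0 0 0), hE' mul _ _ hm ?_, hE' circ c _ hc ?_⟩
      · simp [Fin.forall_fin_two, tm, tbl, appMul, cA03, funext_iff]
      · simp [Fin.forall_fin_two, tm, tbl, appCirc, funext_iff]
        grind
  · simp [Fin.forall_fin_two, tm, tbl, cA04] at hb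
    simp [Fin.forall_fin_two, tm] at ha
    have h10 : c 1 0 0 = 0 := by grind
    have h01 : c 0 1 0 = 0 := by grind
    have h110 : c 1 1 0 = 0 := by grind
    have h111 : c 1 1 1 = 0 := by grind
    have hp : c 0 0 0 = 2 * c 0 1 1 - c 1 0 1 := by grind
    simp only [h10, h01, h110, h111, hp] at ha
    generalize hk : c 0 1 1 = k at *
    generalize hd : c 1 0 1 = d at *
    generalize hq : c 0 0 1 = q at *
    clear hb
    by_cases hk0 : k = 0
    · subst hk0
      by_cases hd0 : d = 0
      · subst hd0
        obtain ⟨E', -, hE'⟩ := exists_changeOfBasis hdim E ![![1, 0], ![0, 1]] (by simp)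
        refine ⟨E', .a18 q, hE' mul _ _ hm ?_, hE' circ c _ hc ?_⟩
        · simp [Fin.forall_fin_two, tm, tbl, appMul, cA04, funext_iff]
        · simp [Fin.forall_fin_two, tm, tbl, appCirc, funext_iff, *]
      · obtain ⟨E', -, hE'⟩ := exists_changeOfBasis hdim E
          ![![1 / d, -q / (2 * d ^ 2)], ![0, 1 / d ^ 2]] (by simp [hd0])
        refine ⟨E', .a17, hE' mul _ _ hm ?_, hE' circ c _ hc ?_⟩
        · simp [Fin.forall_fin_two, tm, tbl, appMul, cA04, funext_iff]
          grind
        · simp [Fin.forall_fin_two, tm, tbl, appCirc, funext_iff, *]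
          grind
    · by_cases hd0 : d / k = 1 / 2
      · have hd' : k = 2 * d := by grind
        subst hd'
        obtain ⟨E', -, hE'⟩ := exists_changeOfBasis hdim E
          ![![1 / (2 * d), 0], ![0, 1 / (2 * d) ^ 2]] (by simp; grind)
        refine ⟨E', .a16 q, hE' mul _ _ hm ?_, hE' circ c _ hc ?_⟩
        · simp [Fin.forall_fin_two, tm, tbl, appMul, cA04, funext_iff]
          grind
        · simp [Fin.forall_fin_two, tm, tbl, appCirc, funext_iff, *]
          grind
      · have hd' : 2 * d - k ≠ 0 := by grind
        obtain ⟨E', -, hE'⟩ := exists_changeOfBasis hdim E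
          ![![1 / k, -q / (k * (2 * d - k))], ![0, 1 / k ^ 2]] (by simp [hk0])
        refine ⟨E', .a15 (d / k) hd0, hE' mul _ _ hm ?_, hE' circ c _ hc ?_⟩
        · simp [Fin.forall_fin_two, tm, tbl, appMul, cA04, funext_iff]
          grind
        · simp [Fin.forall_fin_two, tm, tbl, appCirc, funext_iff, *]
          grind

theorem exists_iso2 (hdim : Module.finrank ℂ A = 2)
    {mul circ : A →ₗ[ℂ] A →ₗ[ℂ] A} (hcomm : ∀ x y : A, mul x y = mul y x)
    (hassoc : ∀ x y z : A, mul (mul x y) z = mul x (mul y z))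
    (hap : ∀ x y z : A, circ x (circ y z) - circ y (circ x z) =
      circ (circ y x - circ x y) z)
    (hcompat : ∀ x y z : A, (2 : ℂ) • circ x (mul y z) =
      circ (mul z x) y + mul z (circ x y))
    (hnz : (∃ x y : A, mul x y ≠ 0) ∨ (∃ x y : A, circ x y ≠ 0)) :
    (∃ i : APIdx, Iso2 (fun x y => mul x y) (fun x y => circ x y) zm (tm (apAlg i))) ∨
      (∃ i : APPIdx, Iso2 (fun x y => mul x y) (fun x y => circ x y)
        (tm (appMul i)) (tm (appCirc i))) := by
  by_cases hm : ∃ x y : A, mul x y ≠ 0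
  · obtain ⟨E, i, h₁, h₂⟩ := exists_isTable_of_mul_ne_zero hdim hcomm hassoc hap hcompat hm
    exact Or.inr ⟨i, h₁.iso2 h₂⟩
  left
  have hc := hnz.resolve_left hm
  push Not at hm
  suffices h : ∃ (E : V2 ≃ₗ[ℂ] A) (i : APIdx), IsTable E circ (apAlg i) by
    obtain ⟨E, i, h⟩ := h
    obtain ⟨φ, -, hφ⟩ := h.iso2 h
    exact ⟨i, φ, fun x y => by simp [hm, zm], hφ⟩
  by_cases hcc : ∃ x y, circ x y ≠ circ y x
  · exact exists_isTable_of_not_comm hdim hcc hap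
  · push Not at hcc
    have hca : ∀ x y z, circ (circ x y) z = circ x (circ y z) := by
      intro x y z
      have := hap x z y
      rw [hcc z x, sub_self, map_zero, LinearMap.zero_apply, sub_eq_zero] at this
      rw [hcc _ z, ← this, hcc z y]
    obtain ⟨E, h | h | h | h⟩ := exists_isTable_of_comm_of_assoc hdim hcc hca hc
    · exact ⟨E, .a01, h⟩
    · exact ⟨E, .a02, h⟩
    · exact ⟨E, .a03, h⟩
    · exact ⟨E, .a04, h⟩

end Tables

theorem exists_matrix_of_iso2 {m c m' c' : Fin 2 → Fin 2 → V2}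
    (h : Iso2 (tm m) (tm c) (tm m') (tm c')) :
    ∃ P : Fin 2 → V2, P 0 0 * P 1 1 - P 0 1 * P 1 0 ≠ 0 ∧
      (∀ i j, m i j 0 • P 0 + m i j 1 • P 1 = tm m' (P i) (P j)) ∧
      (∀ i j, c i j 0 • P 0 + c i j 1 • P 1 = tm c' (P i) (P j)) := by
  obtain ⟨φ, hm, hc⟩ := h
  have hφ := LinearMap.apply_eq_smul_single φ.toLinearMap
  simp only [LinearEquiv.coe_coe] at hφ
  have hs : ∀ (t : Fin 2 → Fin 2 → V2) (i j : Fin 2),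
      tm t (Pi.single i 1) (Pi.single j 1) = t i j := by
    intro t i j
    fin_cases i <;> fin_cases j <;> simp [tm]
  refine ⟨fun i => φ (Pi.single i 1), ?_, fun i j => ?_, fun i j => ?_⟩
  · have hli : LinearIndependent ℂ (fun i : Fin 2 => φ (Pi.single i 1)) := by
      have := (Pi.basisFun ℂ (Fin 2)).linearIndependent.map' φ.toLinearMap φ.ker
      have he : (fun i : Fin 2 => φ (Pi.single i 1)) = φ.toLinearMap ∘ Pi.basisFun ℂ (Fin 2) := by
        ext i : 1
        simp
      rw [he]
      exact this
    have := (Matrix.linearIndependent_rows_iff_isUnit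
      (A := Matrix.of fun i : Fin 2 => φ (Pi.single i 1))).1 hli
    rw [Matrix.isUnit_iff_isUnit_det, Matrix.det_fin_two, isUnit_iff_ne_zero] at this
    exact this
  · rw [← hm, hs, ← hφ]
  · rw [← hc, hs, ← hφ]

theorem iso2_a10_swap (α β : ℂ) :
    Iso2 (tm (appMul (.a10 α β))) (tm (appCirc (.a10 α β)))
      (tm (appMul (.a10 β α))) (tm (appCirc (.a10 β α))) := by
  refine ⟨LinearEquiv.funCongrLeft ℂ ℂ (Equiv.swap 0 1), fun x y => ?_, fun x y => ?_⟩ <;>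
    ext k <;> fin_cases k <;>
    simp [tm, tbl, appMul, appCirc, cA01, LinearEquiv.funCongrLeft_apply, LinearMap.funLeft]

set_option maxHeartbeats 4000000 in
theorem eq_or_swap_of_iso2 (i j : APPIdx)
    (h : Iso2 (tm (appMul i)) (tm (appCirc i)) (tm (appMul j)) (tm (appCirc j))) :
    i = j ∨ ∃ α β : ℂ, i = .a10 α β ∧ j = .a10 β α := by
  obtain ⟨P, hdet, hm, hc⟩ := exists_matrix_of_iso2 h
  generalize ha : P 0 0 = a at *
  generalize hb : P 0 1 = b at *
  generalize hc' : P 1 0 = c at *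
  generalize hd : P 1 1 = d at *
  cases i <;> cases j <;>
    simp [Fin.forall_fin_two, tm, tbl, appMul, appCirc, cA01, cA02, cA03, cA04,
      funext_iff, ha, hb, hc', hd] at hm hc ⊢ <;> grind

/-- Every nonzero 2-dimensional anti-pre-Lie Poisson algebra over ℂ is
isomorphic to one of the anti-pre-Lie algebras A01–A09 (with `· ≡ 0`) or to one of
A10–A18; moreover among A10–A18 the only nontrivial isomorphism is
`A10^{α,β} ≅ A10^{β,α}`. -/
theorem statement17 (A : Type*) [AddCommGroup A] [Module ℂ A]
    (hdim : Module.finrank ℂ A = 2)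
    (mul circ : A →ₗ[ℂ] A →ₗ[ℂ] A)
    (hcomm : ∀ x y : A, mul x y = mul y x)
    (hassoc : ∀ x y z : A, mul (mul x y) z = mul x (mul y z))
    (hap₁ : ∀ x y z : A, circ x (circ y z) - circ y (circ x z) =
      circ (circ y x - circ x y) z)
    (hap₂ : ∀ x y z : A, circ (circ x y - circ y x) z + circ (circ y z - circ z y) x +
      circ (circ z x - circ x z) y = 0)
    (hcompat₁ : ∀ x y z : A, (2 : ℂ) • mul (circ x y) z - (2 : ℂ) • mul (circ y x) z =
      mul y (circ x z) - mul x (circ y z))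
    (hcompat₂ : ∀ x y z : A, (2 : ℂ) • circ x (mul y z) =
      circ (mul z x) y + mul z (circ x y))
    (hnz : (∃ x y : A, mul x y ≠ 0) ∨ (∃ x y : A, circ x y ≠ 0)) :
    ((∃ i : APIdx, Iso2 (fun x y => mul x y) (fun x y => circ x y)
        zm (tm (apAlg i))) ∨
     (∃ i : APPIdx, Iso2 (fun x y => mul x y) (fun x y => circ x y)
        (tm (appMul i)) (tm (appCirc i)))) ∧
    (∀ α β : ℂ, Iso2 (tm (appMul (.a10 α β))) (tm (appCirc (.a10 α β)))
        (tm (appMul (.a10 β α))) (tm (appCirc (.a10 β α)))) ∧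
    (∀ i j : APPIdx, Iso2 (tm (appMul i)) (tm (appCirc i))
        (tm (appMul j)) (tm (appCirc j)) →
        i = j ∨ ∃ α β : ℂ, i = .a10 α β ∧ j = .a10 β α) := by
  exact ⟨exists_iso2 hdim hcomm hassoc hap₁ hcompat₂ hnz, iso2_a10_swap, eq_or_swap_of_iso2⟩
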